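/- Let U be a word of length m over a type α and let p be a natural number with 0 < p < m such that U has period p, i.e., U[i] = U[i + p] for every i with i + p < m. Then, setting k = m / p (integer division, so k > 0), there exist words B and C with |C| = p such that B is a terminal subword of C and U = B ++ C^k. -/

import Mathlib

/-- `wordPow C k` is the concatenation of `k` copies of the word `C`. -/
def wordPow {α : Type*} (C : List α) (k : ℕ) : List α := (List.replicate k C).flatten

/-!
If `U` has period `p` and `C` is the word of its last `p` letters, then `U` is a suffix of `U ++ C`.
Iterating, `U` is a suffix of `U ++ C^n` for every `n`, hence of `C^n` itself once `C^n` is at least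
as long as `U`. For `k = |U| / p` this makes `U` a suffix of `C^(k+1) = C ++ C^k`. So is `C^k`,
which is no longer than `U`, and hence `U = B ++ C^k` with `B` a suffix of `C`.
-/

section Words

variable {α : Type*} {U C : List α}

theorem wordPow_succ (C : List α) (k : ℕ) : wordPow C (k + 1) = C ++ wordPow C k := by
  rw [wordPow, List.replicate_succ, List.flatten_cons, wordPow]

theorem wordPow_succ' (C : List α) (k : ℕ) : wordPow C (k + 1) = wordPow C k ++ C := by
  rw [wordPow, List.replicate_succ', List.flatten_concat, wordPow]

theorem length_wordPow (C : List α) (k : ℕ) : (wordPow C k).length = k * C.length := by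
  simp [wordPow]

theorem suffix_append_wordPow_of_suffix_append (h : U <:+ U ++ C) (k : ℕ) :
    U <:+ U ++ wordPow C k := by
  induction k with
  | zero => simp [wordPow]
  | succ k ih =>
    have hC : U ++ C <:+ (U ++ wordPow C k) ++ C := List.suffix_append_self_iff.mpr ih
    rw [wordPow_succ', ← List.append_assoc]
    exact h.trans hC

theorem suffix_wordPow_of_suffix_append (h : U <:+ U ++ C) {k : ℕ}
    (hk : U.length ≤ k * C.length) : U <:+ wordPow C k :=
  List.suffix_of_suffix_length_le (suffix_append_wordPow_of_suffix_append h k)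
    (List.suffix_append U _) (hk.trans_eq (length_wordPow C k).symm)

theorem exists_suffix_eq_append_wordPow_of_suffix_append (h : U <:+ U ++ C) (hC : C ≠ []) :
    ∃ B : List α, B <:+ C ∧ U = B ++ wordPow C (U.length / C.length) := by
  set k := U.length / C.length
  have hlt : U.length < (k + 1) * C.length :=
    Nat.lt_mul_of_div_lt k.lt_succ_self (List.length_pos_of_ne_nil hC)
  have hU : U <:+ C ++ wordPow C k :=
    wordPow_succ C k ▸ suffix_wordPow_of_suffix_append h hlt.le
  have hle : (wordPow C k).length ≤ U.length :=
    (length_wordPow C k).trans_le (Nat.div_mul_le_self _ _)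
  obtain ⟨B, hB⟩ : wordPow C k <:+ U :=
    List.suffix_of_suffix_length_le (List.suffix_append C _) hU hle
  exact ⟨B, List.suffix_append_self_iff.mp (hB ▸ hU), hB.symm⟩

theorem suffix_append_drop_of_hasPeriod {p : ℕ} (hU : U.HasPeriod p) :
    U <:+ U ++ U.drop (U.length - p) := by
  have hdrop : U.drop p = U.take (U.length - p) := by
    simpa only [List.length_drop] using List.prefix_iff_eq_take.mp (hU.drop_prefix p)
  refine ⟨U.take p, ?_⟩
  calc U.take p ++ U
      = U.take p ++ (U.take (U.length - p) ++ U.drop (U.length - p)) := by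
        rw [List.take_append_drop]
    _ = U ++ U.drop (U.length - p) := by
        rw [← hdrop, ← List.append_assoc, List.take_append_drop]

theorem exists_eq_append_wordPow_of_hasPeriod {p : ℕ} (hU : U.HasPeriod p) (hp0 : 0 < p)
    (hp : p ≤ U.length) :
    ∃ B C : List α, C.length = p ∧ B <:+ C ∧ U = B ++ wordPow C (U.length / p) := by
  have hlen : (U.drop (U.length - p)).length = p := by
    rw [List.length_drop, Nat.sub_sub_self hp]
  obtain ⟨B, hB, hUB⟩ := exists_suffix_eq_append_wordPow_of_suffix_append
    (suffix_append_drop_of_hasPeriod hU) (List.ne_nil_of_length_pos (hlen.symm ▸ hp0))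
  exact ⟨B, _, hlen, hB, by rwa [hlen] at hUB⟩

end Words

/-- If a word `U` of length `m` has period `p` with `0 < p < m`, then, setting
`k = m / p` (so `k > 0`), there are words `B`, `C` with `|C| = p`, `B` a terminal
subword (suffix) of `C`, and `U = B ++ C^k`. -/
theorem statement1 {α : Type*} (U : List α) (m p : ℕ) (hm : U.length = m)
    (hp0 : 0 < p) (hpm : p < m)
    (hper : ∀ i : ℕ, i + p < m → U[i]? = U[i + p]?) :
    0 < m / p ∧ ∃ B C : List α, C.length = p ∧ B <:+ C ∧ U = B ++ wordPow C (m / p) := by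
  subst hm
  have hU : U.HasPeriod p :=
    List.hasPeriod_iff_getElem?.mpr fun i hi => hper i (Nat.add_lt_of_lt_sub hi)
  exact ⟨Nat.div_pos hpm.le hp0, exists_eq_append_wordPow_of_hasPeriod hU hp0 hpm.le⟩
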